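/- Let P ⊆ ℝ^d be a d-dimensional simplicial reflexive polytope and F a special facet of P. Then |H_P(F,1)| = d, |H_P(F,0)| ≤ d, and 0 ≤ d + Σ_{i ≤ −1} i·|H_P(F,i)|; in particular Σ_{i ≤ −1} |H_P(F,i)| ≤ d. -/

import Mathlib

noncomputable section

/-- The standard inner product on `ℝ^d`. -/
def dotp {d : ℕ} (x y : Fin d → ℝ) : ℝ := ∑ i, x i * y i

/-- `x` is a point of the lattice `ℤ^d`. -/
def IsLP {d : ℕ} (x : Fin d → ℝ) : Prop := ∀ i, ∃ n : ℤ, x i = (n : ℝ)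

/-- A lattice polytope: convex hull of finitely many lattice points. -/
def IsLatticePolytope {d : ℕ} (P : Set (Fin d → ℝ)) : Prop :=
  ∃ V : Finset (Fin d → ℝ), (∀ v ∈ V, IsLP v) ∧ P = convexHull ℝ (V : Set (Fin d → ℝ))

/-- The dual polytope `P* = {x | ⟨x,y⟩ ≤ 1 ∀ y ∈ P}`. -/
def dualPolytope {d : ℕ} (P : Set (Fin d → ℝ)) : Set (Fin d → ℝ) :=
  {x | ∀ y ∈ P, dotp x y ≤ 1}

/-- `P` is a reflexive polytope: a (`d`-dimensional) lattice polytope with `0` in its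
interior whose dual is again a lattice polytope. -/
def IsReflexive {d : ℕ} (P : Set (Fin d → ℝ)) : Prop :=
  IsLatticePolytope P ∧ (0 : Fin d → ℝ) ∈ interior P ∧ IsLatticePolytope (dualPolytope P)

/-- `F` is a facet of `P` with (uniquely determined) outer normal `u`, normalized by
`⟨u, F⟩ = 1` (possible since `0` is in the interior of `P`). -/
def IsFacetNormal {d : ℕ} (P F : Set (Fin d → ℝ)) (u : Fin d → ℝ) : Prop :=
  F.Nonempty ∧ (∀ y ∈ P, dotp u y ≤ 1) ∧ F = {y ∈ P | dotp u y = 1} ∧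
    Module.finrank ℝ (vectorSpan ℝ F) = d - 1

/-- `F` is a facet of `P`. -/
def IsFacet {d : ℕ} (P F : Set (Fin d → ℝ)) : Prop := ∃ u, IsFacetNormal P F u

/-- `P` is simplicial: every facet has exactly `d` vertices. -/
def IsSimplicial {d : ℕ} (P : Set (Fin d → ℝ)) : Prop :=
  ∀ F, IsFacet P F → (Set.extremePoints ℝ F).ncard = d

/-- The functional `dotp u` as a linear map. -/
def dl {d : ℕ} (u : Fin d → ℝ) : (Fin d → ℝ) →ₗ[ℝ] ℝ where
  toFun y := dotp u y
  map_add' x y := by simp [dotp, mul_add, Finset.sum_add_distrib]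
  map_smul' c x := by
    simp only [dotp, Finset.mul_sum, Pi.smul_apply, smul_eq_mul, RingHom.id_apply]
    exact Finset.sum_congr rfl fun i _ => by ring

theorem dl_apply {d : ℕ} (u y : Fin d → ℝ) : dl u y = dotp u y := rfl

theorem dotp_comm' {d : ℕ} (u y : Fin d → ℝ) : dotp u y = dotp y u := by
  simp [dotp, mul_comm]

theorem dotp_comb_left {d : ℕ} (a b : ℝ) (x y z : Fin d → ℝ) :
    dotp (a • x + b • y) z = a * dotp x z + b * dotp y z := by
  rw [dotp_comm', ← dl_apply, map_add, map_smul, map_smul, dl_apply, dl_apply,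
    dotp_comm' z, dotp_comm' z]
  rfl

theorem dotp_comb_right {d : ℕ} (a b : ℝ) (x y z : Fin d → ℝ) :
    dotp z (a • x + b • y) = a * dotp z x + b * dotp z y := by
  rw [← dl_apply, map_add, map_smul, map_smul]; rfl

theorem exists_dotp {d : ℕ} (f : (Fin d → ℝ) →ₗ[ℝ] ℝ) : ∃ w, ∀ y, dotp w y = f y := by
  refine ⟨fun i => f (Pi.single i 1), fun y => ?_⟩
  rw [f.pi_apply_eq_sum_univ y, dotp]
  refine Finset.sum_congr rfl fun i _ => ?_
  rw [smul_eq_mul, mul_comm]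
  congr 2
  ext j
  simp [Pi.single_apply, eq_comm]

theorem dotp_left_inj {d : ℕ} {a b : Fin d → ℝ} (h : dl a = dl b) : a = b := by
  ext i
  have := congrArg (fun f => f (Pi.single i 1)) h
  simpa [dl_apply, dotp, Pi.single_apply] using this

theorem IsLP.dotp_int {d : ℕ} {a b : Fin d → ℝ} (ha : IsLP a) (hb : IsLP b) :
    ∃ n : ℤ, dotp a b = n := by
  choose f hf using ha
  choose g hg using hb
  exact ⟨∑ i, f i * g i, by simp [dotp, hf, hg]⟩

theorem face_extreme {d : ℕ} {P : Set (Fin d → ℝ)} {u : Fin d → ℝ}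
    (hle : ∀ y ∈ P, dotp u y ≤ 1) : IsExtreme ℝ P {y ∈ P | dotp u y = 1} := by
  refine ⟨fun y hy => hy.1, ?_⟩
  rintro x hx y hy z hz ⟨a, b, ha, hb, hab, rfl⟩
  refine ⟨hx, ?_⟩
  have h := hz.2
  rw [dotp_comb_right] at h
  have h1 := hle x hx
  have h2 := hle y hy
  by_contra hne
  have h3 : dotp u x < 1 := lt_of_le_of_ne h1 hne
  nlinarith

theorem integral_normal {d : ℕ} {P : Set (Fin d → ℝ)} {u : Fin d → ℝ} {ι : Type*}
    (hD : IsLatticePolytope (dualPolytope P)) (b : Module.Basis ι ℝ (Fin d → ℝ))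
    (hb : ∀ i, b i ∈ P) (hle : ∀ y ∈ P, dotp u y ≤ 1) (h1 : ∀ i, dotp u (b i) = 1) :
    IsLP u := by
  obtain ⟨W, hW, hPW⟩ := hD
  have hext : u ∈ Set.extremePoints ℝ (dualPolytope P) := by
    refine ⟨hle, ?_⟩
    rintro x hx y hy ⟨a, c, ha, hc, hac, rfl⟩
    apply dotp_left_inj
    refine b.ext fun i => ?_
    rw [dl_apply, dl_apply, h1 i]
    have h := h1 i
    rw [dotp_comb_left] at h
    have e1 := hx _ (hb i)
    have e2 := hy _ (hb i)
    by_contra hne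
    have h3 : dotp x (b i) < 1 := lt_of_le_of_ne e1 hne
    nlinarith
  rw [hPW] at hext
  exact hW u (extremePoints_convexHull_subset hext)

theorem facet_of_basis {d : ℕ} {P : Set (Fin d → ℝ)} {u : Fin d → ℝ} {ι : Type*}
    [Fintype ι] [Nonempty ι] (b : Module.Basis ι ℝ (Fin d → ℝ))
    (hb : ∀ i, b i ∈ P) (hle : ∀ y ∈ P, dotp u y ≤ 1) (h1 : ∀ i, dotp u (b i) = 1) :
    IsFacetNormal P {y ∈ P | dotp u y = 1} u := by
  obtain ⟨i0⟩ := ‹Nonempty ι›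
  have : Nonempty ι := ⟨i0⟩
  refine ⟨⟨b i0, hb i0, h1 i0⟩, hle, rfl, ?_⟩
  have hcard : Fintype.card ι = d := by
    have := Module.finrank_eq_card_basis b
    simpa using this.symm
  have hlow := b.linearIndependent.affineIndependent.finrank_vectorSpan_add_one
  have hsub : vectorSpan ℝ (Set.range b) ≤ vectorSpan ℝ {y ∈ P | dotp u y = 1} := by
    apply vectorSpan_mono
    rintro _ ⟨i, rfl⟩
    exact ⟨hb i, h1 i⟩
  have h2 := Submodule.finrank_mono hsub
  have h3 : vectorSpan ℝ {y ∈ P | dotp u y = 1} ≤ LinearMap.ker (dl u) := by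
    rw [vectorSpan, Submodule.span_le]
    rintro _ ⟨x, hx, y, hy, rfl⟩
    change dl u (x - y) = 0
    rw [map_sub, dl_apply, dl_apply, hx.2, hy.2, sub_self]
  have h4 : LinearMap.ker (dl u) < ⊤ := by
    rw [lt_top_iff_ne_top]
    intro h
    have : b i0 ∈ LinearMap.ker (dl u) := h ▸ Submodule.mem_top
    rw [LinearMap.mem_ker, dl_apply, h1] at this
    norm_num at this
  have h5 := Submodule.finrank_lt_finrank_of_lt (lt_of_le_of_lt h3 h4)
  simp only [finrank_top, Module.finrank_fin_fun] at h5
  omega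

theorem exists_facet_basis {d : ℕ} {P F : Set (Fin d → ℝ)} {u : Fin d → ℝ}
    (hc : IsCompact P) (hcv : Convex ℝ P) (hF : IsFacetNormal P F u)
    (hn : (Set.extremePoints ℝ F).ncard = d) (hd : 0 < d) :
    ∃ b : Module.Basis (Set.extremePoints ℝ F) ℝ (Fin d → ℝ), ∀ i, b i = i := by
  obtain ⟨hne, hle, hFe, hrk⟩ := hF
  have hfin : (Set.extremePoints ℝ F).Finite := Set.finite_of_ncard_pos (by omega)
  have := hfin.fintype
  have hcont : Continuous fun y : Fin d → ℝ => dotp u y := by unfold dotp; fun_prop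
  have hFc : IsCompact F := by
    rw [hFe]
    exact hc.inter_right (isClosed_singleton.preimage hcont (t := {(1:ℝ)}))
  have hFcv : Convex ℝ F := by
    rw [hFe]
    exact hcv.inter ((convex_singleton (1:ℝ)).linear_preimage (dl u))
  have hKM := closure_convexHull_extremePoints hFc hFcv
  rw [(hfin.isClosed_convexHull ℝ).closure_eq] at hKM
  have hvs : vectorSpan ℝ F = vectorSpan ℝ (Set.extremePoints ℝ F) := by
    rw [← direction_affineSpan, ← direction_affineSpan]
    conv_lhs => rw [← hKM, affineSpan_convexHull]
  have hcard : Fintype.card (Set.extremePoints ℝ F) = d := by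
    refine Eq.trans ?_ hn
    rw [Set.ncard_eq_toFinset_card', Set.toFinset_card]
  have hai : AffineIndependent ℝ ((↑) : Set.extremePoints ℝ F → (Fin d → ℝ)) := by
    rw [affineIndependent_iff_finrank_vectorSpan_eq (n := d - 1) ℝ _
      (hcard.trans (by omega))]
    rw [Subtype.range_coe, ← hvs, hrk]
  have hli : LinearIndependent ℝ ((↑) : Set.extremePoints ℝ F → (Fin d → ℝ)) := by
    rw [linearIndependent_iff']
    intro s g hg i hi
    refine affineIndependent_iff.1 hai s g ?_ hg i hi
    have := congrArg (dl u) hg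
    rw [map_sum, map_zero] at this
    rw [← this]
    refine Finset.sum_congr rfl fun j _ => ?_
    have hj : dotp u (j : Fin d → ℝ) = 1 := (hFe.subset j.2.1).2
    rw [map_smul, dl_apply, hj, smul_eq_mul, mul_one]
  have : Nonempty (Set.extremePoints ℝ F) := Fintype.card_pos_iff.1 (by omega)
  refine ⟨basisOfLinearIndependentOfCardEqFinrank hli (by simp [hcard]), fun i => by simp⟩

/-- The neighbouring facet across the ridge opposite to `i`: there is at most one vertex in
`H(F,0)` with negative `i`-th coordinate. -/
theorem neighbour {d : ℕ} {P : Set (Fin d → ℝ)} {u : Fin d → ℝ} {ι : Type*} [Fintype ι]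
    (hD : IsLatticePolytope (dualPolytope P)) (hs : IsSimplicial P)
    (h0 : (0 : Fin d → ℝ) ∈ interior P)
    (V : Finset (Fin d → ℝ)) (hV : (V : Set (Fin d → ℝ)) = Set.extremePoints ℝ P)
    (hPV : P = convexHull ℝ (V : Set (Fin d → ℝ)))
    (hVint : ∀ v ∈ V, IsLP v)
    (hle : ∀ y ∈ P, dotp u y ≤ 1)
    (b : Module.Basis ι ℝ (Fin d → ℝ)) (hb : ∀ i, b i ∈ V) (h1 : ∀ i, dotp u (b i) = 1)
    (hall : ∀ v ∈ V, dotp u v = 1 → ∃ i, v = b i) (i : ι) :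
    ∃ w, ∀ x ∈ V, dotp u x = 0 → b.coord i x < 0 → x = w := by
  classical
  have hVP : ∀ v ∈ V, v ∈ P := fun v hv => by rw [hPV]; exact subset_convexHull ℝ _ hv
  obtain ⟨c, hc⟩ := exists_dotp (b.coord i)
  -- a vertex with negative coordinate
  have hneg : (V.filter fun v => b.coord i v < 0).Nonempty := by
    by_contra hemp
    rw [Finset.not_nonempty_iff_eq_empty, Finset.filter_eq_empty_iff] at hemp
    have hsub : P ⊆ {y | 0 ≤ b.coord i y} := by
      rw [hPV]
      refine convexHull_min (fun v hv => not_lt.1 (hemp hv)) ?_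
      exact (convex_Ici (0:ℝ)).linear_preimage (b.coord i)
    have hnh : P ∈ nhds (0 : Fin d → ℝ) := mem_interior_iff_mem_nhds.1 h0
    have ht : Filter.Tendsto (fun t : ℝ => (-t) • b i) (nhds 0) (nhds (0 : Fin d → ℝ)) := by
      have : Continuous fun t : ℝ => (-t) • b i := by fun_prop
      simpa using this.tendsto 0
    have hev := ht hnh
    obtain ⟨t, htpos, ht⟩ := (Metric.mem_nhds_iff.1 hev)
    have hm : t / 2 ∈ Metric.ball (0:ℝ) t := by
      rw [Metric.mem_ball, Real.dist_eq, sub_zero, abs_of_pos (by linarith)]; linarith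
    have := hsub (ht hm)
    simp at this
    linarith
  obtain ⟨w, hw, hmin⟩ := Finset.exists_min_image _
    (fun v => (1 - dotp u v) / (- b.coord i v)) hneg
  rw [Finset.mem_filter] at hw
  obtain ⟨hwV, hwn⟩ := hw
  set s : ℝ := (1 - dotp u w) / (- b.coord i w) with hsdef
  have hwF : ∀ j, b j ≠ w := by
    rintro j rfl
    simp [Module.Basis.coord_apply, Finsupp.single_apply] at hwn
    split_ifs at hwn <;> linarith
  have hwlt : dotp u w < 1 := by
    refine lt_of_le_of_ne (hle w (hVP w hwV)) fun h => ?_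
    obtain ⟨j, hj⟩ := hall w hwV h
    exact hwF j hj.symm
  have hspos : 0 < s := div_pos (by linarith) (by linarith)
  obtain ⟨u', hu'⟩ : ∃ u' : Fin d → ℝ, ∀ y, dotp u' y = dotp u y - s * b.coord i y := by
    refine ⟨(1:ℝ) • u + (-s) • c, fun y => ?_⟩
    rw [dotp_comb_left, hc]; ring
  have hle' : ∀ y ∈ P, dotp u' y ≤ 1 := by
    have : P ⊆ {y | dl u' y ≤ 1} := by
      rw [hPV]
      refine convexHull_min (fun v hv => ?_) ((convex_Iic (1:ℝ)).linear_preimage (dl u'))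
      change dotp u' v ≤ 1
      rw [hu']
      by_cases hn : b.coord i v < 0
      · have h := hmin v (Finset.mem_filter.2 ⟨hv, hn⟩)
        change s ≤ _ at h
        rw [le_div_iff₀ (by linarith)] at h
        linarith
      · have := hle v (hVP v hv)
        nlinarith
    exact this
  have hw1 : dotp u' w = 1 := by
    rw [hu', hsdef]
    have : b.coord i w ≠ 0 := hwn.ne
    field_simp
    ring
  -- new basis
  have hli : LinearIndependent ℝ (Function.update b i w) := by
    rw [Fintype.linearIndependent_iff]
    intro g hg
    have hgi : g i = 0 := by
      have := congrArg (b.coord i) hg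
      rw [map_sum, map_zero, Finset.sum_eq_single i] at this
      · rw [map_smul, Function.update_self, smul_eq_mul] at this
        exact (mul_eq_zero.1 this).resolve_right hwn.ne
      · intro j _ hj
        rw [Function.update_of_ne hj]
        simp [Module.Basis.coord_apply, Finsupp.single_apply, hj]
      · simp
    have hg2 : ∑ j, g j • b j = 0 := by
      rw [← hg]
      refine Finset.sum_congr rfl fun j _ => ?_
      by_cases hj : j = i
      · subst hj; simp [hgi]
      · rw [Function.update_of_ne hj]
    exact Fintype.linearIndependent_iff.1 b.linearIndependent g hg2
  have hcard : Fintype.card ι = d := by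
    have := Module.finrank_eq_card_basis b
    simpa using this.symm
  have : Nonempty ι := ⟨i⟩
  let b' := basisOfLinearIndependentOfCardEqFinrank hli (by simp [hcard])
  have hb' : ∀ j, b' j = Function.update b i w j := fun j => by simp [b']
  have hb'V : ∀ j, b' j ∈ V := by
    intro j
    rw [hb']
    by_cases hj : j = i
    · subst hj; simpa using hwV
    · rw [Function.update_of_ne hj]; exact hb j
  have hb'1 : ∀ j, dotp u' (b' j) = 1 := by
    intro j
    rw [hb']
    by_cases hj : j = i
    · subst hj; simpa using hw1
    · rw [Function.update_of_ne hj, hu', h1]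
      simp [Module.Basis.coord_apply, Finsupp.single_apply, hj]
  have hfac := facet_of_basis b' (fun j => hVP _ (hb'V j)) hle' hb'1
  have hu_lat := integral_normal hD b' (fun j => hVP _ (hb'V j)) hle' hb'1
  have hnc := hs _ ⟨_, hfac⟩
  have hd : 0 < d := hcard ▸ Fintype.card_pos
  have hextF := (face_extreme hle').extremePoints_eq
  have hrange : Set.range b' = Set.extremePoints ℝ {y ∈ P | dotp u' y = 1} := by
    refine Set.eq_of_subset_of_ncard_le ?_ ?_ (Set.finite_of_ncard_pos (by omega))
    · rintro _ ⟨j, rfl⟩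
      rw [hextF, ← hV]
      exact ⟨⟨hVP _ (hb'V j), hb'1 j⟩, hb'V j⟩
    · rw [hnc, ← Set.image_univ, Set.ncard_image_of_injective _ b'.injective, Set.ncard_univ,
        Nat.card_eq_fintype_card, hcard]
  refine ⟨w, fun x hx hx0 hxn => ?_⟩
  obtain ⟨n, hn⟩ := hu_lat.dotp_int (hVint x hx)
  have hxle := hle' x (hVP x hx)
  have hxpos : 0 < dotp u' x := by rw [hu', hx0]; nlinarith
  have hx1 : dotp u' x = 1 := by
    rw [hn] at hxle hxpos ⊢
    have a1 : n ≤ 1 := by exact_mod_cast hxle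
    have a2 : 0 < n := by exact_mod_cast hxpos
    have : n = 1 := by omega
    simp [this]
  have hxm : x ∈ Set.range b' := by
    rw [hrange, hextF, ← hV]
    exact ⟨⟨hVP x hx, hx1⟩, hx⟩
  obtain ⟨j, rfl⟩ := hxm
  rw [hb'] at hx0 ⊢
  by_cases hj : j = i
  · subst hj; simp
  · rw [Function.update_of_ne hj, h1] at hx0
    norm_num at hx0

/-- for a special facet `F` of a simplicial reflexive polytope:
`|H_P(F,1)| = d`, `|H_P(F,0)| ≤ d`, `0 ≤ d + ∑_{i ≤ -1} i·|H_P(F,i)|`, and in particular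
`∑_{i ≤ -1} |H_P(F,i)| ≤ d`. -/
theorem stmt16 {d : ℕ} (P : Set (Fin d → ℝ)) (hP : IsReflexive P) (hs : IsSimplicial P)
    (V : Finset (Fin d → ℝ)) (hV : (V : Set (Fin d → ℝ)) = Set.extremePoints ℝ P)
    (F : Set (Fin d → ℝ)) (u : Fin d → ℝ) (hF : IsFacetNormal P F u)
    (hspec : ∃ t : ℝ, 0 ≤ t ∧ ∃ x ∈ F, (∑ v ∈ V, v) = t • x) :
    {v ∈ Set.extremePoints ℝ P | dotp u v = 1}.ncard = d ∧
    {v ∈ Set.extremePoints ℝ P | dotp u v = 0}.ncard ≤ d ∧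
    0 ≤ (d : ℝ) + ∑ v ∈ V, (if dotp u v ≤ -1 then dotp u v else 0) ∧
    {v ∈ Set.extremePoints ℝ P | dotp u v ≤ -1}.ncard ≤ d := by
  have hd : 0 < d := by
    rcases Nat.eq_zero_or_pos d with rfl | h
    · obtain ⟨⟨x, hx⟩, _, hFe, _⟩ := hF
      rw [hFe] at hx
      have := hx.2
      simp [dotp] at this
    · exact h
  obtain ⟨⟨W, hW, hPW⟩, h0, hD⟩ := hP
  have hc : IsCompact P := by rw [hPW]; exact W.finite_toSet.isCompact_convexHull ℝ
  have hcv : Convex ℝ P := by rw [hPW]; exact convex_convexHull ℝ _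
  have hPV : P = convexHull ℝ (V : Set (Fin d → ℝ)) := by
    have := closure_convexHull_extremePoints hc hcv
    rw [← hV, (V.finite_toSet.isClosed_convexHull ℝ).closure_eq] at this
    exact this.symm
  have hVint : ∀ v ∈ V, IsLP v := by
    intro v hv
    have : v ∈ Set.extremePoints ℝ P := by rw [← hV]; exact hv
    rw [hPW] at this
    exact hW v (extremePoints_convexHull_subset this)
  have hVP : ∀ v ∈ V, v ∈ P := fun v hv => by rw [hPV]; exact subset_convexHull ℝ _ hv
  have hn := hs F ⟨u, hF⟩
  obtain ⟨b, hb⟩ := exists_facet_basis hc hcv hF hn hd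
  have hfin : (Set.extremePoints ℝ F).Finite := Set.finite_of_ncard_pos (by omega)
  have := hfin.fintype
  obtain ⟨hne, hle, hFe, hrk⟩ := hF
  have hextF : Set.extremePoints ℝ F = F ∩ Set.extremePoints ℝ P := by
    rw [hFe]; exact (face_extreme hle).extremePoints_eq
  have hextF' : Set.extremePoints ℝ F = {v ∈ Set.extremePoints ℝ P | dotp u v = 1} := by
    rw [hextF]
    ext v
    constructor
    · rintro ⟨h, h'⟩
      rw [hFe] at h
      exact ⟨h', h.2⟩
    · rintro ⟨h, h'⟩
      refine ⟨?_, h⟩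
      rw [hFe]
      exact ⟨h.1, h'⟩
  have hbV : ∀ i, b i ∈ V := by
    intro i
    rw [hb, ← Finset.mem_coe, hV]
    exact (hextF'.subset i.2).1
  have hb1 : ∀ i, dotp u (b i) = 1 := by
    intro i
    rw [hb]
    exact (hextF'.subset i.2).2
  have hall : ∀ v ∈ V, dotp u v = 1 → ∃ i, v = b i := by
    intro v hv h
    have hm : v ∈ Set.extremePoints ℝ F := by
      rw [hextF', ← hV]; exact ⟨hv, h⟩
    exact ⟨⟨v, hm⟩, by rw [hb]⟩
  have huint : IsLP u := integral_normal hD b (fun i => hVP _ (hbV i)) hle hb1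
  have hcard : Fintype.card (Set.extremePoints ℝ F) = d := by
    refine Eq.trans ?_ hn
    rw [Set.ncard_eq_toFinset_card', Set.toFinset_card]
  have hfil : ∀ p : (Fin d → ℝ) → Prop, ∀ [DecidablePred p],
      {v ∈ Set.extremePoints ℝ P | p v}.ncard = (V.filter p).card := by
    intro p _
    rw [← Set.ncard_coe_finset]
    congr 1
    ext v
    rw [← hV]
    simp
  have H1 : {v ∈ Set.extremePoints ℝ P | dotp u v = 1}.ncard = d := by rw [← hextF', hn]
  have H3 : 0 ≤ (d : ℝ) + ∑ v ∈ V, (if dotp u v ≤ -1 then dotp u v else 0) := by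
    obtain ⟨t, ht, x, hx, hsum⟩ := hspec
    have hx1 : dotp u x = 1 := by rw [hFe] at hx; exact hx.2
    have h := congrArg (dl u) hsum
    rw [map_sum, map_smul, dl_apply, hx1, smul_eq_mul, mul_one] at h
    have hdd : (d : ℝ) = ∑ v ∈ V, (if dotp u v = 1 then (1:ℝ) else 0) := by
      rw [Finset.sum_boole, ← hfil, H1]
    rw [hdd, ← Finset.sum_add_distrib]
    rw [← h] at ht
    refine ht.trans (Finset.sum_le_sum fun v hv => ?_)
    rw [dl_apply]
    obtain ⟨n, hn⟩ := huint.dotp_int (hVint v hv)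
    have hl := hle v (hVP v hv)
    rw [hn] at hl ⊢
    have hl' : n ≤ 1 := by exact_mod_cast hl
    have hcase : n = 1 ∨ n = 0 ∨ n ≤ -1 := by omega
    rcases hcase with rfl | rfl | h
    · norm_num
    · norm_num
    · have h' : (n : ℝ) ≤ -1 := by exact_mod_cast h
      have h2 : (n : ℝ) ≠ 1 := by linarith
      simp [h', h2]
  refine ⟨H1, ?_, H3, ?_⟩
  · have hnb := fun i => neighbour hD hs h0 V hV hPV hVint hle b hbV hb1 hall i
    choose w hw using hnb
    have hsub : {v ∈ Set.extremePoints ℝ P | dotp u v = 0} ⊆ Set.range w := by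
      rintro x ⟨hx, hx0⟩
      rw [← hV] at hx
      have hrep := b.sum_repr x
      have hsum : ∑ i, b.repr x i = 0 := by
        have h := congrArg (dl u) hrep
        rw [map_sum, dl_apply, hx0] at h
        rw [← h]
        refine Finset.sum_congr rfl fun i _ => ?_
        rw [map_smul, dl_apply, hb1, smul_eq_mul, mul_one]
      have hex : ∃ i, b.repr x i < 0 := by
        by_contra hno
        push Not at hno
        have hz := (Finset.sum_eq_zero_iff_of_nonneg fun i _ => hno i).1 hsum
        have hx00 : x = 0 := by
          rw [← hrep]
          exact Finset.sum_eq_zero fun i hi => by rw [hz i hi, zero_smul]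
        -- 0 is not extreme
        subst hx00
        have hxe : (0 : Fin d → ℝ) ∈ Set.extremePoints ℝ P := by rw [← hV]; exact hx
        have hnh : P ∈ nhds (0 : Fin d → ℝ) := mem_interior_iff_mem_nhds.1 h0
        obtain ⟨x0, hx0F⟩ := hne
        have ht : Filter.Tendsto (fun t : ℝ => t • x0) (nhds 0) (nhds (0 : Fin d → ℝ)) := by
          have : Continuous fun t : ℝ => t • x0 := by fun_prop
          simpa using this.tendsto 0
        obtain ⟨t, htpos, ht⟩ := (Metric.mem_nhds_iff.1 (ht hnh))
        have hm : t / 2 ∈ Metric.ball (0:ℝ) t := by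
          rw [Metric.mem_ball, Real.dist_eq, sub_zero, abs_of_pos (by linarith)]; linarith
        have hm' : -(t / 2) ∈ Metric.ball (0:ℝ) t := by
          rw [Metric.mem_ball, Real.dist_eq, sub_zero, abs_neg, abs_of_pos (by linarith)]; linarith
        have heq := hxe.2 (ht hm) (ht hm')
          ⟨1/2, 1/2, by norm_num, by norm_num, by norm_num, by ext j; simp⟩
        have h := congrArg (dl u) heq
        rw [hFe] at hx0F
        simp only [map_smul, map_zero, dl_apply, hx0F.2, smul_eq_mul] at h
        linarith
      obtain ⟨i, hi⟩ := hex
      exact ⟨i, (hw i x hx hx0 hi).symm⟩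
    calc _ ≤ (Set.range w).ncard := Set.ncard_le_ncard hsub (Set.finite_range w)
      _ ≤ d := by
        rw [← Set.image_univ]
        refine (Set.ncard_image_le (Set.finite_univ)).trans ?_
        rw [Set.ncard_univ, Nat.card_eq_fintype_card, hcard]
  · rw [hfil]
    have : ∑ v ∈ V, (if dotp u v ≤ -1 then dotp u v else 0)
        ≤ ∑ v ∈ V, -(if dotp u v ≤ -1 then (1:ℝ) else 0) := by
      refine Finset.sum_le_sum fun v _ => ?_
      split_ifs with h
      · exact h
      · simp
    rw [Finset.sum_neg_distrib, Finset.sum_boole] at this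
    have h : ((V.filter fun v => dotp u v ≤ -1).card : ℝ) ≤ d := by linarith
    exact_mod_cast h
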